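/- For each positive integer q, the counting function n ↦ u_P(q;n) is a quasipolynomial in n of degree 2q: there exist a positive integer p and polynomials f_0, …, f_{p−1} with rational coefficients, each of degree exactly 2q and with leading coefficient (vol B)^q / q! (where vol B is the Lebesgue area of B), such that u_P(q;n) = f_{n mod p}(n) for every integer n ≥ 0. -/

import Mathlib

open MeasureTheory Pointwise

/-!
A `q`-tuple of pairwise nonattacking points is a lattice point of a dilate of `B° × ⋯ × B° ⊂ ℝ^{2q}`
off the hyperplanes "points `i` and `j` attack each other by the move `m`", and every set of `q`
points arises from `q!` tuples. The lattice points of all the dilates form a cone in `ℤ × ℤ^{2q}`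
cut out by homogeneous linear inequalities, so its indicator is piecewise quasipolynomial. Piecewise
quasipolynomials are closed under summation over an interval with linear endpoints; summing out all
the coordinates but the dilation factor `t` leaves a function that is a quasipolynomial for `t > 0`.
Since neither the hyperplanes nor the boundary of the convex set `B°^q` have any volume, the number
of tuples is asymptotic to `(vol B)^q t^{2q}`, which determines the degree and the leading
coefficient of every constituent.
-/

namespace QQueens

/-! ### Quasipolynomials on the integers -/

section Quasipoly

open Polynomial

/-- The algebra of quasipolynomial functions on `ℤ`; `P r` is the constituent on the residue class
of `r`, and only its values at `0 ≤ r < N` matter. -/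
def quasipoly : Subalgebra ℚ (ℤ → ℚ) where
  carrier := {τ | ∃ N : ℤ, 0 < N ∧ ∃ P : ℤ → ℚ[X], ∀ y, τ y = (P (y % N)).eval (y : ℚ)}
  mul_mem' := by
    rintro σ τ ⟨N, hN, P, hσ⟩ ⟨K, hK, Q, hτ⟩
    refine ⟨N * K, mul_pos hN hK, fun r => P (r % N) * Q (r % K), fun y => ?_⟩
    simp only [Int.emod_emod_of_dvd y (dvd_mul_right N K),
      Int.emod_emod_of_dvd y (dvd_mul_left K N), eval_mul, Pi.mul_apply, hσ, hτ]
  add_mem' := by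
    rintro σ τ ⟨N, hN, P, hσ⟩ ⟨K, hK, Q, hτ⟩
    refine ⟨N * K, mul_pos hN hK, fun r => P (r % N) + Q (r % K), fun y => ?_⟩
    simp only [Int.emod_emod_of_dvd y (dvd_mul_right N K),
      Int.emod_emod_of_dvd y (dvd_mul_left K N), eval_add, Pi.add_apply, hσ, hτ]
  algebraMap_mem' c := ⟨1, one_pos, fun _ => C c, fun y => by simp⟩

lemma comp_emod_mem_quasipoly {N : ℤ} (hN : 0 < N) (φ : ℤ → ℚ) :
    (fun y => φ (y % N)) ∈ quasipoly :=
  ⟨N, hN, fun r => C (φ r), fun y => by simp⟩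

lemma intCast_mem_quasipoly : (fun y : ℤ => (y : ℚ)) ∈ quasipoly :=
  ⟨1, one_pos, fun _ => X, fun y => by simp⟩

lemma eval_comp_mem {X : Type*} {S : Subalgebra ℚ (X → ℚ)} (P : ℚ[X]) {f : X → ℚ} (hf : f ∈ S) :
    (fun x => P.eval (f x)) ∈ S := by
  have h : (fun x => P.eval (f x)) = aeval f P := by
    ext x
    rw [aeval_fn_apply, coe_aeval_eq_eval]
  rw [h]
  exact Algebra.adjoin_le (Set.singleton_subset_iff.mpr hf) (aeval_mem_adjoin_singleton ℚ f)

lemma cast_ediv_eq (a : ℤ) {N : ℤ} (hN : N ≠ 0) :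
    ((a / N : ℤ) : ℚ) = (N : ℚ)⁻¹ * (a - (a % N : ℤ)) := by
  have h : ((a % N : ℤ) : ℚ) + N * (a / N : ℤ) = a := by exact_mod_cast Int.emod_add_mul_ediv a N
  rw [← h, add_sub_cancel_left, inv_mul_cancel_left₀ (Int.cast_ne_zero.mpr hN)]

lemma ediv_mem_quasipoly {N : ℤ} (hN : 0 < N) (k : ℤ) :
    (fun y => (((y + k) / N : ℤ) : ℚ)) ∈ quasipoly := by
  have hmod : (fun y : ℤ => (((y + k) % N : ℤ) : ℚ)) ∈ quasipoly := by
    simpa only [Int.emod_add_emod] using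
      comp_emod_mem_quasipoly hN fun r => (((r + k) % N : ℤ) : ℚ)
  have h := quasipoly.smul_mem (quasipoly.sub_mem (quasipoly.add_mem intCast_mem_quasipoly
    (quasipoly.algebraMap_mem (k : ℚ))) hmod) (N : ℚ)⁻¹
  convert h using 1
  ext y
  simp [cast_ediv_eq _ hN.ne']

lemma exists_polynomial_antidifference (P : ℚ[X]) :
    ∃ Q : ℚ[X], ∀ x : ℚ, Q.eval (x + 1) - Q.eval x = P.eval x := by
  induction P using Polynomial.induction_on' with
  | add P₁ P₂ h₁ h₂ =>
    obtain ⟨Q₁, hQ₁⟩ := h₁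
    obtain ⟨Q₂, hQ₂⟩ := h₂
    exact ⟨Q₁ + Q₂, fun x => by simp only [eval_add, ← hQ₁, ← hQ₂]; ring⟩
  | monomial n a =>
    refine ⟨C (a / (n + 1)) * Polynomial.bernoulli (n + 1), fun x => ?_⟩
    simp only [eval_mul, eval_C, add_comm x 1, bernoulli_eval_one_add, eval_monomial,
      Nat.add_sub_cancel]
    push_cast
    field_simp
    ring

lemma sub_one_ediv_of_not_dvd {N a : ℤ} (hN : 0 < N) (h : ¬ N ∣ a) : (a - 1) / N = a / N := by
  have hne : a % N ≠ 0 := fun h0 => h (Int.dvd_of_emod_eq_zero h0)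
  have hlt := Int.emod_lt_of_pos a hN
  have hnonneg := Int.emod_nonneg a hN.ne'
  have hdecomp : a - 1 = (a % N - 1) + N * (a / N) := by
    linarith [Int.emod_add_mul_ediv a N]
  rw [hdecomp, Int.add_mul_ediv_left _ _ hN.ne', Int.ediv_eq_zero_of_lt (by omega) (by omega),
    zero_add]

lemma exists_antidifference_on_residue {N : ℤ} (hN : 0 < N) (P : ℚ[X]) (c : ℤ) :
    ∃ T ∈ quasipoly, ∀ y, T (y + 1) - T y = if N ∣ y - c then P.eval (y : ℚ) else 0 := by
  obtain ⟨Q, hQ⟩ := exists_polynomial_antidifference (P.comp (C (c : ℚ) + C (N : ℚ) * (X + 1)))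
  refine ⟨fun y => Q.eval (((y + (-c - 1)) / N : ℤ) : ℚ),
    eval_comp_mem Q (ediv_mem_quasipoly hN _), fun y => ?_⟩
  simp only [show y + 1 + (-c - 1) = y - c by ring, show y + (-c - 1) = y - c - 1 by ring]
  split_ifs with hdvd
  · obtain ⟨k, hk⟩ := hdvd
    have hpred : (N * k - 1) / N = k - 1 := by
      rw [sub_eq_add_neg, Int.mul_add_ediv_left _ _ hN.ne', Int.neg_one_ediv,
        Int.sign_eq_one_of_pos hN]
      rfl
    have hy : (c : ℚ) + N * k = y := by exact_mod_cast show c + N * k = y by linarith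
    have := hQ (k - 1)
    simp only [sub_add_cancel, eval_comp, eval_add, eval_mul, eval_C, eval_X, eval_one, hy] at this
    rw [hk, Int.mul_ediv_cancel_left _ hN.ne', hpred]
    simpa using this
  · rw [sub_one_ediv_of_not_dvd hN hdvd, sub_self]

lemma exists_antidifference {τ : ℤ → ℚ} (hτ : τ ∈ quasipoly) :
    ∃ T ∈ quasipoly, ∀ y, T (y + 1) - T y = τ y := by
  obtain ⟨N, hN, P, hP⟩ := hτ
  choose T hT hdiff using fun c => exists_antidifference_on_residue hN (P c) c
  refine ⟨∑ c ∈ Finset.Ico 0 N, T c, quasipoly.sum_mem fun c _ => hT c, fun y => ?_⟩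
  have hmem : y % N ∈ Finset.Ico 0 N :=
    Finset.mem_Ico.mpr ⟨Int.emod_nonneg y hN.ne', Int.emod_lt_of_pos y hN⟩
  have hresidue : ∀ c ∈ Finset.Ico 0 N, N ∣ y - c ↔ y % N = c := fun c hc => by
    rw [Int.dvd_iff_emod_eq_zero, ← Int.emod_eq_emod_iff_emod_sub_eq_zero,
      Int.emod_eq_of_lt (Finset.mem_Ico.mp hc).1 (Finset.mem_Ico.mp hc).2]
  calc (∑ c ∈ Finset.Ico 0 N, T c) (y + 1) - (∑ c ∈ Finset.Ico 0 N, T c) y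
      = ∑ c ∈ Finset.Ico 0 N, if N ∣ y - c then (P c).eval (y : ℚ) else 0 := by
        simp only [Finset.sum_apply, ← Finset.sum_sub_distrib, hdiff]
    _ = ∑ c ∈ Finset.Ico 0 N, if y % N = c then (P c).eval (y : ℚ) else 0 :=
        Finset.sum_congr rfl fun c hc => by simp only [hresidue c hc]
    _ = τ y := by rw [Finset.sum_ite_eq, if_pos hmem, hP]

lemma sum_Ico_eq_sub_of_antidifference {τ T : ℤ → ℚ} (h : ∀ y, T (y + 1) - T y = τ y) {a b : ℤ}
    (hab : a ≤ b) : ∑ y ∈ Finset.Ico a b, τ y = T b - T a := by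
  induction b, hab using Int.leInduction with
  | base => simp
  | succ b hb ih =>
    rw [← Finset.insert_Ico_right_eq_Ico_add_one hb, Finset.sum_insert Finset.right_notMem_Ico, ih,
      ← h b]
    ring

end Quasipoly

/-! ### Piecewise quasipolynomials on an abelian group -/

section PiecewiseQuasipoly

variable {G H ι : Type*} [AddCommGroup G] [AddCommGroup H]

/-- The algebra of piecewise quasipolynomial functions on `G`, generated by the periodic functions,
the linear forms and the indicators of open half-spaces. The half-spaces are homogeneous, so that on
`ℤ` the pieces are just the two open half-lines and the origin. -/
def piecewiseQuasipoly (G : Type*) [AddCommGroup G] : Subalgebra ℚ (G → ℚ) :=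
  Algebra.adjoin ℚ ({f | ∃ N : ℤ, 0 < N ∧ ∀ x v, f (x + N • v) = f x} ∪
    Set.range (fun (L : G →+ ℤ) x => (L x : ℚ)) ∪
    Set.range (fun (L : G →+ ℤ) => {x | 0 < L x}.indicator 1))

lemma periodic_mem_piecewiseQuasipoly {f : G → ℚ} {N : ℤ} (hN : 0 < N)
    (hf : ∀ x v, f (x + N • v) = f x) : f ∈ piecewiseQuasipoly G :=
  Algebra.subset_adjoin (.inl (.inl ⟨N, hN, hf⟩))

lemma linear_mem_piecewiseQuasipoly (L : G →+ ℤ) :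
    (fun x => (L x : ℚ)) ∈ piecewiseQuasipoly G :=
  Algebra.subset_adjoin (.inl (.inr ⟨L, rfl⟩))

lemma indicator_pos_mem_piecewiseQuasipoly (L : G →+ ℤ) :
    {x | 0 < L x}.indicator 1 ∈ piecewiseQuasipoly G :=
  Algebra.subset_adjoin (.inr ⟨L, rfl⟩)

lemma comp_hom_mem_piecewiseQuasipoly (φ : H →+ G) {f : G → ℚ} (hf : f ∈ piecewiseQuasipoly G) :
    f ∘ φ ∈ piecewiseQuasipoly H := by
  induction hf using Algebra.adjoin_induction with
  | mem f hf =>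
    rcases hf with (⟨N, hN, hper⟩ | ⟨L, rfl⟩) | ⟨L, rfl⟩
    · exact periodic_mem_piecewiseQuasipoly hN fun x v => by simp [hper]
    · exact linear_mem_piecewiseQuasipoly (L.comp φ)
    · exact indicator_pos_mem_piecewiseQuasipoly (L.comp φ)
  | algebraMap r => exact (piecewiseQuasipoly H).algebraMap_mem r
  | add f g _ _ hf hg => exact (piecewiseQuasipoly H).add_mem hf hg
  | mul f g _ _ hf hg => exact (piecewiseQuasipoly H).mul_mem hf hg

lemma ediv_mem_piecewiseQuasipoly (L : G →+ ℤ) (e : ℤ) {D : ℤ} (hD : 0 < D) :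
    (fun x => (((L x + e) / D : ℤ) : ℚ)) ∈ piecewiseQuasipoly G := by
  have hmod : (fun x => (((L x + e) % D : ℤ) : ℚ)) ∈ piecewiseQuasipoly G :=
    periodic_mem_piecewiseQuasipoly hD fun x v => by
      rw [map_add, map_zsmul, smul_eq_mul, add_right_comm, Int.add_mul_emod_self_left]
  have h := (piecewiseQuasipoly G).smul_mem ((piecewiseQuasipoly G).sub_mem
    ((piecewiseQuasipoly G).add_mem (linear_mem_piecewiseQuasipoly L)
      ((piecewiseQuasipoly G).algebraMap_mem (e : ℚ))) hmod) (D : ℚ)⁻¹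
  convert h using 1
  ext x
  simp [cast_ediv_eq _ hD.ne']

lemma quasipoly_comp_ediv_mem_piecewiseQuasipoly {τ : ℤ → ℚ} (hτ : τ ∈ quasipoly) (L : G →+ ℤ)
    (e : ℤ) {D : ℤ} (hD : 0 < D) : (fun x => τ ((L x + e) / D)) ∈ piecewiseQuasipoly G := by
  obtain ⟨N, hN, P, hP⟩ := hτ
  have hpiece : ∀ r ∈ Finset.Ico 0 N, (fun x => (if (L x + e) / D % N = r then (1 : ℚ) else 0)) *
      (fun x => (P r).eval (((L x + e) / D : ℤ) : ℚ)) ∈ piecewiseQuasipoly G := fun r _ =>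
    (piecewiseQuasipoly G).mul_mem
      (periodic_mem_piecewiseQuasipoly (mul_pos hD hN) fun x v => by
        rw [map_add, map_zsmul, smul_eq_mul, add_right_comm, mul_assoc,
          Int.add_mul_ediv_left _ _ hD.ne', Int.add_mul_emod_self_left])
      (eval_comp_mem (P r) (ediv_mem_piecewiseQuasipoly L e hD))
  convert (piecewiseQuasipoly G).sum_mem hpiece using 1
  ext x
  have hmem : (L x + e) / D % N ∈ Finset.Ico 0 N :=
    Finset.mem_Ico.mpr ⟨Int.emod_nonneg _ hN.ne', Int.emod_lt_of_pos _ hN⟩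
  simp only [Finset.sum_apply, Pi.mul_apply, ite_mul, one_mul, zero_mul, Finset.sum_ite_eq, hmem,
    if_true, hP]

lemma quasipoly_comp_hom_mem_piecewiseQuasipoly {τ : ℤ → ℚ} (hτ : τ ∈ quasipoly) (L : G →+ ℤ) :
    τ ∘ L ∈ piecewiseQuasipoly G := by
  simpa using! quasipoly_comp_ediv_mem_piecewiseQuasipoly hτ L 0 one_pos

lemma exists_quasipoly_eqOn_pos {f : ℤ → ℚ} (hf : f ∈ piecewiseQuasipoly ℤ) :
    ∃ τ ∈ quasipoly, Set.EqOn f τ (Set.Ioi 0) := by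
  have hlin : ∀ (L : ℤ →+ ℤ) (t : ℤ), L t = t * L 1 := fun L t => by
    simpa using map_zsmul L t 1
  induction hf using Algebra.adjoin_induction with
  | mem f hf =>
    rcases hf with (⟨N, hN, hper⟩ | ⟨L, rfl⟩) | ⟨L, rfl⟩
    · refine ⟨fun y => f (y % N), comp_emod_mem_quasipoly hN f, fun t _ => ?_⟩
      simpa [Int.emod_add_mul_ediv] using hper (t % N) (t / N)
    · refine ⟨(L 1 : ℚ) • fun y : ℤ => (y : ℚ), quasipoly.smul_mem intCast_mem_quasipoly _,
        fun t _ => ?_⟩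
      simp [hlin L t, mul_comm]
    · refine ⟨_, quasipoly.algebraMap_mem (if 0 < L 1 then 1 else 0), fun t (ht : 0 < t) => ?_⟩
      simp [Set.indicator_apply, hlin L t, mul_pos_iff_of_pos_left ht]
  | algebraMap r => exact ⟨_, quasipoly.algebraMap_mem r, fun _ _ => rfl⟩
  | add f g _ _ hf hg =>
    obtain ⟨σ, hσ, hfσ⟩ := hf
    obtain ⟨τ, hτ, hgτ⟩ := hg
    exact ⟨σ + τ, quasipoly.add_mem hσ hτ, fun t ht => by simp [hfσ ht, hgτ ht]⟩
  | mul f g _ _ hf hg =>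
    obtain ⟨σ, hσ, hfσ⟩ := hf
    obtain ⟨τ, hτ, hgτ⟩ := hg
    exact ⟨σ * τ, quasipoly.mul_mem hσ hτ, fun t ht => by simp [hfσ ht, hgτ ht]⟩

/-- A set is definable when its indicator is piecewise quasipolynomial. The definable sets form a
Boolean algebra containing the sets cut out by homogeneous linear inequalities. -/
def Definable (s : Set G) : Prop := s.indicator 1 ∈ piecewiseQuasipoly G

lemma definable_pos (L : G →+ ℤ) : Definable {x | 0 < L x} :=
  indicator_pos_mem_piecewiseQuasipoly L

lemma definable_univ : Definable (Set.univ : Set G) := by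
  rw [Definable, Set.indicator_univ]
  exact (piecewiseQuasipoly G).one_mem

lemma Definable.compl {s : Set G} (hs : Definable s) : Definable sᶜ := by
  rw [Definable, Set.indicator_compl]
  exact (piecewiseQuasipoly G).sub_mem (piecewiseQuasipoly G).one_mem hs

lemma Definable.inter {s t : Set G} (hs : Definable s) (ht : Definable t) : Definable (s ∩ t) := by
  rw [Definable, Set.inter_indicator_one]
  exact (piecewiseQuasipoly G).mul_mem hs ht

lemma Definable.union {s t : Set G} (hs : Definable s) (ht : Definable t) : Definable (s ∪ t) := by
  simpa [Set.compl_inter] using (hs.compl.inter ht.compl).compl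

lemma Definable.biInter {s : Finset ι} {t : ι → Set G} (h : ∀ i ∈ s, Definable (t i)) :
    Definable (⋂ i ∈ s, t i) := by
  classical
  induction s using Finset.induction_on with
  | empty => simpa using definable_univ
  | insert a s _ ih =>
    rw [Finset.forall_mem_insert] at h
    rw [Finset.set_biInter_insert]
    exact h.1.inter (ih h.2)

lemma Definable.biUnion {s : Finset ι} {t : ι → Set G} (h : ∀ i ∈ s, Definable (t i)) :
    Definable (⋃ i ∈ s, t i) := by
  simpa [Set.compl_iInter] using (Definable.biInter fun i hi => (h i hi).compl).compl

lemma Definable.preimage {s : Set G} (hs : Definable s) (φ : H →+ G) : Definable (φ ⁻¹' s) :=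
  comp_hom_mem_piecewiseQuasipoly φ hs

lemma definable_ne_zero (L : G →+ ℤ) : Definable {x | L x ≠ 0} := by
  convert ((definable_pos L).compl.inter (definable_pos (-L)).compl).compl using 1
  ext x
  simp [le_antisymm_iff]

end PiecewiseQuasipoly

/-! ### Summation over an interval with linear endpoints -/

section Summation

lemma mul_mem_span_of_forall {R A : Type*} [CommRing R] [CommRing A] [Algebra R A] {s : Set A}
    {a w : A} (h : ∀ b ∈ s, a * b ∈ Submodule.span R s) (hw : w ∈ Submodule.span R s) :
    a * w ∈ Submodule.span R s :=
  (Submodule.span_le (p := (Submodule.span R s).comap (LinearMap.mulLeft R a))).mpr h hw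

lemma mul_mem_of_mem_adjoin {R A : Type*} [CommRing R] [CommRing A] [Algebra R A] {s : Set A}
    {W : Submodule R A} (h : ∀ a ∈ s, ∀ w ∈ W, a * w ∈ W) {a w : A} (ha : a ∈ Algebra.adjoin R s)
    (hw : w ∈ W) : a * w ∈ W := by
  induction ha using Algebra.adjoin_induction generalizing w with
  | mem a ha => exact h a ha w hw
  | algebraMap r => simpa [Algebra.smul_def] using W.smul_mem r hw
  | add a b _ _ iha ihb => simpa [add_mul] using W.add_mem (iha hw) (ihb hw)
  | mul a b _ _ iha ihb => simpa [mul_assoc] using iha (ihb hw)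

variable {G : Type*} [AddCommGroup G]

/-- The points of `G × ℤ` with `y > L g / b` (if `e = 0`) or `y ≥ L g / b` (if `e = 1`), for
`b > 0`: a half-line in the `ℤ` direction whose endpoint depends on `g`. -/
def upperHalfLine (b : ℤ) (L : G →+ ℤ) (e : ℤ) : Set (G × ℤ) :=
  {x | L x.1 < b * x.2 + e}

/-- The products of a piecewise quasipolynomial on `G`, a quasipolynomial in the last variable and
the indicator of an upper half-line. -/
def halfLineTerms (G : Type*) [AddCommGroup G] : Set (G × ℤ → ℚ) :=
  {F | ∃ a ∈ piecewiseQuasipoly G, ∃ τ ∈ quasipoly, ∃ b > 0, ∃ L : G →+ ℤ, ∃ e ∈ ({0, 1} : Set ℤ),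
    F = a ∘ Prod.fst * τ ∘ Prod.snd * (upperHalfLine b L e).indicator 1}

lemma indicator_upperHalfLine_mem_halfLineTerms {b : ℤ} (hb : 0 < b) (L : G →+ ℤ) {e : ℤ}
    (he : e ∈ ({0, 1} : Set ℤ)) : (upperHalfLine b L e).indicator 1 ∈ halfLineTerms G :=
  ⟨1, one_mem _, 1, one_mem _, b, hb, L, e, he, by ext; simp⟩

lemma lt_mul_add_of_mul_le_mul {b₁ b₂ e₁ e₂ l₁ l₂ y : ℤ} (hb₁ : 0 < b₁) (hb₂ : 0 < b₂)
    (he₁ : e₁ ∈ ({0, 1} : Set ℤ)) (he₂ : e₂ ∈ ({0, 1} : Set ℤ)) (he : e₁ ≤ e₂)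
    (hl : b₁ * l₂ ≤ b₂ * l₁) (h : l₁ < b₁ * y + e₁) : l₂ < b₂ * y + e₂ := by
  rcases he₂ with rfl | rfl
  · obtain rfl : e₁ = 0 := by rcases he₁ with rfl | rfl <;> omega
    have : b₁ * l₂ < b₁ * (b₂ * y) := by nlinarith
    linarith [lt_of_mul_lt_mul_left this hb₁.le]
  · have hl₁ : l₁ ≤ b₁ * y := by rcases he₁ with rfl | rfl <;> omega
    have : b₁ * l₂ ≤ b₁ * (b₂ * y) := by nlinarith only [hb₂, hl, hl₁]
    linarith [le_of_mul_le_mul_left this hb₁]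

lemma lt_mul_add_of_mul_lt_mul {b₁ b₂ e₁ e₂ l₁ l₂ y : ℤ} (hb₁ : 0 < b₁) (hb₂ : 0 < b₂)
    (he₁ : e₁ ∈ ({0, 1} : Set ℤ)) (he₂ : e₂ ∈ ({0, 1} : Set ℤ))
    (hl : b₂ * l₁ < b₁ * l₂) (h : l₂ < b₂ * y + e₂) : l₁ < b₁ * y + e₁ := by
  have hl₂ : l₂ ≤ b₂ * y := by rcases he₂ with rfl | rfl <;> omega
  have : b₂ * l₁ < b₂ * (b₁ * y) := by nlinarith
  have hl₁ := lt_of_mul_lt_mul_left this hb₂.le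
  rcases he₁ with rfl | rfl <;> omega

lemma indicator_upperHalfLine_mul {b₁ b₂ e₁ e₂ : ℤ} {L₁ L₂ : G →+ ℤ} (hb₁ : 0 < b₁) (hb₂ : 0 < b₂)
    (he₁ : e₁ ∈ ({0, 1} : Set ℤ)) (he₂ : e₂ ∈ ({0, 1} : Set ℤ)) (he : e₁ ≤ e₂) :
    (upperHalfLine b₁ L₁ e₁).indicator (1 : G × ℤ → ℚ) * (upperHalfLine b₂ L₂ e₂).indicator 1 =
      {g | 0 < (b₁ • L₂ - b₂ • L₁) g}ᶜ.indicator 1 ∘ Prod.fst *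
          (upperHalfLine b₁ L₁ e₁).indicator 1 +
        {g | 0 < (b₁ • L₂ - b₂ • L₁) g}.indicator 1 ∘ Prod.fst *
          (upperHalfLine b₂ L₂ e₂).indicator 1 := by
  ext ⟨g, y⟩
  by_cases hl : b₂ * L₁ g < b₁ * L₂ g
  · have := lt_mul_add_of_mul_lt_mul (y := y) hb₁ hb₂ he₁ he₂ hl
    by_cases L₂ g < b₂ * y + e₂ <;> simp_all [upperHalfLine]
  · have := lt_mul_add_of_mul_le_mul (y := y) hb₁ hb₂ he₁ he₂ he (not_lt.mp hl)
    by_cases L₁ g < b₁ * y + e₁ <;> simp_all [upperHalfLine]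

lemma mul_mem_span_halfLineTerms {F₁ F₂ : G × ℤ → ℚ} (h₁ : F₁ ∈ halfLineTerms G)
    (h₂ : F₂ ∈ halfLineTerms G) : F₁ * F₂ ∈ Submodule.span ℚ (halfLineTerms G) := by
  obtain ⟨a₁, ha₁, τ₁, hτ₁, b₁, hb₁, L₁, e₁, he₁, rfl⟩ := h₁
  obtain ⟨a₂, ha₂, τ₂, hτ₂, b₂, hb₂, L₂, e₂, he₂, rfl⟩ := h₂
  wlog he : e₁ ≤ e₂ generalizing a₁ τ₁ b₁ L₁ e₁ a₂ τ₂ b₂ L₂ e₂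
  · rw [mul_comm]
    exact this a₂ ha₂ τ₂ hτ₂ b₂ hb₂ L₂ e₂ he₂ a₁ ha₁ τ₁ hτ₁ b₁ hb₁ L₁ e₁ he₁ (le_of_not_ge he)
  have hτ := mul_mem hτ₁ hτ₂
  have hD := definable_pos (b₁ • L₂ - b₂ • L₁)
  set D := {g | 0 < (b₁ • L₂ - b₂ • L₁) g}
  have hsum := add_mem
    (Submodule.subset_span (R := ℚ) (s := halfLineTerms G)
      ⟨_, mul_mem (mul_mem ha₁ ha₂) hD.compl, _, hτ, b₁, hb₁, L₁, e₁, he₁, rfl⟩)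
    (Submodule.subset_span
      ⟨_, mul_mem (mul_mem ha₁ ha₂) hD, _, hτ, b₂, hb₂, L₂, e₂, he₂, rfl⟩)
  convert hsum using 1
  calc _ = (a₁ * a₂) ∘ Prod.fst * (τ₁ * τ₂) ∘ Prod.snd *
        ((upperHalfLine b₁ L₁ e₁).indicator 1 * (upperHalfLine b₂ L₂ e₂).indicator 1) := by
        simp only [Pi.mul_comp]; ring
    _ = _ := by
        rw [indicator_upperHalfLine_mul hb₁ hb₂ he₁ he₂ he]
        simp only [Pi.mul_comp]; ring

lemma comp_fst_mul_mem_span_halfLineTerms {a : G → ℚ} (ha : a ∈ piecewiseQuasipoly G)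
    {w : G × ℤ → ℚ} (hw : w ∈ Submodule.span ℚ (halfLineTerms G)) :
    a ∘ Prod.fst * w ∈ Submodule.span ℚ (halfLineTerms G) := by
  refine mul_mem_span_of_forall ?_ hw
  rintro _ ⟨a', ha', τ, hτ, b, hb, L, e, he, rfl⟩
  exact Submodule.subset_span
    ⟨a * a', mul_mem ha ha', τ, hτ, b, hb, L, e, he, by simp only [Pi.mul_comp, mul_assoc]⟩

lemma comp_snd_mul_mem_span_halfLineTerms {τ : ℤ → ℚ} (hτ : τ ∈ quasipoly)
    {w : G × ℤ → ℚ} (hw : w ∈ Submodule.span ℚ (halfLineTerms G)) :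
    τ ∘ Prod.snd * w ∈ Submodule.span ℚ (halfLineTerms G) := by
  refine mul_mem_span_of_forall ?_ hw
  rintro _ ⟨a, ha, τ', hτ', b, hb, L, e, he, rfl⟩
  exact Submodule.subset_span
    ⟨a, ha, τ * τ', mul_mem hτ hτ', b, hb, L, e, he, by simp only [Pi.mul_comp]; ring⟩

lemma hom_apply_prod_int (L : G × ℤ →+ ℤ) (x : G × ℤ) :
    L x = L.comp (AddMonoidHom.inl G ℤ) x.1 + x.2 * L (0, 1) := by
  have hx : x = (x.1, 0) + x.2 • (0, 1) := by ext <;> simp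
  conv_lhs => rw [hx, map_add, map_zsmul, smul_eq_mul]
  rfl

lemma periodic_eq_sum_residues {F : G × ℤ → ℚ} {N : ℤ} (hN : 0 < N)
    (hF : ∀ x v, F (x + N • v) = F x) :
    F = ∑ r ∈ Finset.Ico 0 N,
      (fun g => F (g, r)) ∘ Prod.fst * (fun y => if y % N = r then 1 else 0) ∘ Prod.snd := by
  ext ⟨g, y⟩
  have hmem : y % N ∈ Finset.Ico 0 N :=
    Finset.mem_Ico.mpr ⟨Int.emod_nonneg y hN.ne', Int.emod_lt_of_pos y hN⟩
  have hper := hF (g, y % N) (0, y / N)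
  simp only [Prod.smul_mk, smul_zero, Prod.mk_add_mk, add_zero, smul_eq_mul,
    Int.emod_add_mul_ediv] at hper
  simp [hper, Finset.mem_Ico.mp hmem]

lemma indicator_pos_mul_mem_span_halfLineTerms (L : G × ℤ →+ ℤ) {w : G × ℤ → ℚ}
    (hw : w ∈ Submodule.span ℚ (halfLineTerms G)) :
    {x | 0 < L x}.indicator 1 * w ∈ Submodule.span ℚ (halfLineTerms G) := by
  have hmul : ∀ {b : ℤ} (_ : 0 < b) (L' : G →+ ℤ) {e : ℤ} (_ : e ∈ ({0, 1} : Set ℤ)),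
      (upperHalfLine b L' e).indicator 1 * w ∈ Submodule.span ℚ (halfLineTerms G) :=
    fun hb L' _ he => mul_mem_span_of_forall
      (fun _ => mul_mem_span_halfLineTerms (indicator_upperHalfLine_mem_halfLineTerms hb L' he)) hw
  set l := L.comp (AddMonoidHom.inl G ℤ)
  rcases lt_trichotomy (L (0, 1)) 0 with hneg | hzero | hpos
  · have hset : {x | 0 < L x} = (upperHalfLine (-L (0, 1)) l 1)ᶜ := by
      ext x
      simp only [upperHalfLine, Set.mem_compl_iff, Set.mem_ofPred_eq, hom_apply_prod_int L x]
      grind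
    rw [hset, Set.indicator_compl, sub_mul, one_mul]
    exact sub_mem hw (hmul (neg_pos.mpr hneg) l (by simp))
  · have hset : {x | 0 < L x} = Prod.fst ⁻¹' {g | 0 < l g} := by
      ext x
      simp [hom_apply_prod_int L x, hzero, l]
    rw [hset]
    exact comp_fst_mul_mem_span_halfLineTerms (definable_pos l) hw
  · have hset : {x | 0 < L x} = upperHalfLine (L (0, 1)) (-l) 0 := by
      ext x
      simp only [upperHalfLine, Set.mem_ofPred_eq, hom_apply_prod_int L x, AddMonoidHom.neg_apply]
      grind
    rw [hset]
    exact hmul hpos (-l) (by simp)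

lemma mul_mem_span_halfLineTerms_of_mem {F w : G × ℤ → ℚ} (hF : F ∈ piecewiseQuasipoly (G × ℤ))
    (hw : w ∈ Submodule.span ℚ (halfLineTerms G)) :
    F * w ∈ Submodule.span ℚ (halfLineTerms G) := by
  refine mul_mem_of_mem_adjoin ?_ hF hw
  rintro F ((⟨N, hN, hper⟩ | ⟨L, rfl⟩) | ⟨L, rfl⟩) w hw
  · rw [periodic_eq_sum_residues hN hper, Finset.sum_mul]
    refine sum_mem fun r _ => ?_
    rw [mul_assoc]
    exact comp_fst_mul_mem_span_halfLineTerms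
      (periodic_mem_piecewiseQuasipoly hN fun g v => by simpa using hper (g, r) (v, 0))
      (comp_snd_mul_mem_span_halfLineTerms
        (comp_emod_mem_quasipoly hN fun s => if s = r then 1 else 0) hw)
  · have hL : (fun x => (L x : ℚ)) = (fun g => (L.comp (AddMonoidHom.inl G ℤ) g : ℚ)) ∘ Prod.fst +
        ((L (0, 1) : ℚ) • fun y : ℤ => (y : ℚ)) ∘ Prod.snd := by
      ext x
      simp [hom_apply_prod_int L x, mul_comm]
    simp only [hL, add_mul]
    exact add_mem (comp_fst_mul_mem_span_halfLineTerms (linear_mem_piecewiseQuasipoly _) hw)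
      (comp_snd_mul_mem_span_halfLineTerms
        (quasipoly.smul_mem intCast_mem_quasipoly _) hw)
  · exact indicator_pos_mul_mem_span_halfLineTerms L hw

lemma definable_upperHalfLine (b : ℤ) (L : G →+ ℤ) {e : ℤ} (he : e ∈ ({0, 1} : Set ℤ)) :
    Definable (upperHalfLine b L e) := by
  rcases he with rfl | rfl
  · convert definable_pos (b • AddMonoidHom.snd G ℤ - L.comp (.fst G ℤ)) using 1
    ext x
    simp [upperHalfLine]
  · convert (definable_pos (L.comp (.fst G ℤ) - b • AddMonoidHom.snd G ℤ)).compl using 1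
    ext x
    simp [upperHalfLine]

lemma mem_upperHalfLine_iff {b : ℤ} (hb : 0 < b) {L : G →+ ℤ} {e : ℤ} {x : G × ℤ} :
    x ∈ upperHalfLine b L e ↔ (L x.1 + (b - e)) / b ≤ x.2 := by
  rw [upperHalfLine, Set.mem_ofPred_eq, ← Int.lt_add_one_iff, Int.ediv_lt_iff_lt_mul hb]
  constructor <;> intro h <;> linarith

lemma exists_antidifference_of_mem_halfLineTerms {w : G × ℤ → ℚ} (hw : w ∈ halfLineTerms G) :
    ∃ A ∈ piecewiseQuasipoly (G × ℤ), ∀ g y, A (g, y + 1) - A (g, y) = w (g, y) := by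
  obtain ⟨a, ha, τ, hτ, b, hb, L, e, he, rfl⟩ := hw
  obtain ⟨T, hT, hdiff⟩ := exists_antidifference hτ
  set θ : G → ℤ := fun g => (L g + (b - e)) / b
  have hline : ∀ g y, (upperHalfLine b L e).indicator (1 : G × ℤ → ℚ) (g, y) =
      if θ g ≤ y then 1 else 0 := fun g y => by
    classical
    simp only [Set.indicator_apply, mem_upperHalfLine_iff hb, Pi.one_apply, θ]
  refine ⟨a ∘ Prod.fst * (upperHalfLine b L e).indicator 1 * (T ∘ Prod.snd - (T ∘ θ) ∘ Prod.fst),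
    mul_mem (mul_mem (comp_hom_mem_piecewiseQuasipoly (.fst G ℤ) ha)
      (definable_upperHalfLine b L he))
      (sub_mem (quasipoly_comp_hom_mem_piecewiseQuasipoly hT (.snd G ℤ))
        (comp_hom_mem_piecewiseQuasipoly (.fst G ℤ)
          (quasipoly_comp_ediv_mem_piecewiseQuasipoly hT L (b - e) hb))), fun g y => ?_⟩
  simp only [Pi.mul_apply, Pi.sub_apply, Function.comp_apply, hline, ← hdiff y]
  rcases lt_trichotomy (θ g) (y + 1) with hlt | heq | hgt
  · simp [hlt.le, Int.lt_add_one_iff.mp hlt]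
    ring
  · simp [heq]
  · simp [hgt.not_ge, (lt_add_one y).trans hgt |>.not_ge]

lemma exists_antidifference_of_mem_span_halfLineTerms {w : G × ℤ → ℚ}
    (hw : w ∈ Submodule.span ℚ (halfLineTerms G)) :
    ∃ A ∈ piecewiseQuasipoly (G × ℤ), ∀ g y, A (g, y + 1) - A (g, y) = w (g, y) := by
  induction hw using Submodule.span_induction with
  | mem w hw => exact exists_antidifference_of_mem_halfLineTerms hw
  | zero => exact ⟨0, zero_mem _, fun _ _ => sub_zero 0⟩
  | add v w _ _ hv hw =>
    obtain ⟨A, hA, hv⟩ := hv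
    obtain ⟨B, hB, hw⟩ := hw
    exact ⟨A + B, add_mem hA hB, fun g y => by simp only [Pi.add_apply, ← hv, ← hw]; ring⟩
  | smul c w _ hw =>
    obtain ⟨A, hA, hw⟩ := hw
    exact ⟨c • A, (piecewiseQuasipoly _).smul_mem hA c, fun g y => by
      simp only [Pi.smul_apply, smul_eq_mul, ← hw, mul_sub]⟩

theorem sum_Ico_mem_piecewiseQuasipoly (a b : G →+ ℤ) {F : G × ℤ → ℚ}
    (hF : F ∈ piecewiseQuasipoly (G × ℤ)) :
    (fun g => ∑ y ∈ Finset.Ico (a g) (b g), F (g, y)) ∈ piecewiseQuasipoly G := by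
  obtain ⟨A, hA, hdiff⟩ := exists_antidifference_of_mem_span_halfLineTerms
    (mul_mem_span_halfLineTerms_of_mem hF (Submodule.subset_span
      (indicator_upperHalfLine_mem_halfLineTerms one_pos a (e := 1) (by simp))))
  have hgraph : ∀ c : G →+ ℤ, (fun g => A (g, c g)) ∈ piecewiseQuasipoly G := fun c =>
    comp_hom_mem_piecewiseQuasipoly ((AddMonoidHom.id G).prod c) hA
  convert mul_mem (definable_pos (b - a)) (sub_mem (hgraph b) (hgraph a)) using 1
  ext g
  rcases lt_or_ge (a g) (b g) with hab | hab
  · have hsum : ∑ y ∈ Finset.Ico (a g) (b g), F (g, y) = A (g, b g) - A (g, a g) := by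
      rw [← sum_Ico_eq_sub_of_antidifference (T := fun y => A (g, y)) (hdiff g) hab.le]
      refine Finset.sum_congr rfl fun y hy => ?_
      have hmem : (g, y) ∈ upperHalfLine 1 a 1 := by
        simpa [upperHalfLine] using (Finset.mem_Ico.mp hy).1
      simp [hmem]
    simp [hsum, hab]
  · simp [hab, hab.not_gt]

lemma sum_piFinset_fin_mem_piecewiseQuasipoly (k : ℕ) (a b : G →+ ℤ) {F : G × (Fin k → ℤ) → ℚ}
    (hF : F ∈ piecewiseQuasipoly (G × (Fin k → ℤ))) :
    (fun g => ∑ z ∈ Fintype.piFinset fun _ => Finset.Ico (a g) (b g), F (g, z)) ∈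
      piecewiseQuasipoly G := by
  induction k generalizing G with
  | zero =>
    convert comp_hom_mem_piecewiseQuasipoly (AddMonoidHom.inl G (Fin 0 → ℤ)) hF using 1
    ext g
    simp only [Fintype.piFinset_of_isEmpty, Finset.univ_unique, Finset.sum_singleton]
    exact congrArg F (Prod.ext rfl (Subsingleton.elim _ _))
  | succ k ih =>
    let cons : (G × ℤ) × (Fin k → ℤ) →+ G × (Fin (k + 1) → ℤ) :=
      { toFun := fun x => (x.1.1, Fin.cons x.1.2 x.2)
        map_zero' := by ext i <;> [rfl; refine Fin.cases ?_ ?_ i] <;> simp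
        map_add' := fun x y => by ext i <;> [rfl; refine Fin.cases ?_ ?_ i] <;> simp }
    have htail := ih (a.comp (.fst G ℤ)) (b.comp (.fst G ℤ))
      (comp_hom_mem_piecewiseQuasipoly cons hF)
    convert sum_Ico_mem_piecewiseQuasipoly a b htail using 1
    ext g
    simp only [AddMonoidHom.comp_apply, AddMonoidHom.coe_fst, ← Finset.sum_product']
    refine (Finset.sum_equiv (Fin.consEquiv fun _ => ℤ) (fun x => ?_) fun _ _ => rfl).symm
    simp [Fin.consEquiv, Fin.forall_fin_succ]

lemma sum_piFinset_mem_piecewiseQuasipoly {ι : Type*} [Fintype ι] [DecidableEq ι] (a b : G →+ ℤ)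
    {F : G × (ι → ℤ) → ℚ} (hF : F ∈ piecewiseQuasipoly (G × (ι → ℤ))) :
    (fun g => ∑ z ∈ Fintype.piFinset fun _ => Finset.Ico (a g) (b g), F (g, z)) ∈
      piecewiseQuasipoly G := by
  let e := Fintype.equivFin ι
  have h := sum_piFinset_fin_mem_piecewiseQuasipoly (Fintype.card ι) a b
    (comp_hom_mem_piecewiseQuasipoly ((AddMonoidHom.id G).prodMap
      (LinearMap.funLeft ℤ ℤ e).toAddMonoidHom) hF)
  convert h using 1
  ext g
  refine Finset.sum_equiv (e.arrowCongr (Equiv.refl ℤ)) (fun z => ?_) fun z _ => ?_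
  · simp [e.symm.forall_congr_left]
  · simp [LinearMap.funLeft, Function.comp_def]

end Summation

/-! ### Quasipolynomial sequences and their leading coefficients -/

section IsQuasipolynomial

open Filter Polynomial Topology

/-- The sequence `a` is a quasipolynomial all of whose constituents have degree `d` and leading
coefficient `c`; the constituents `f k` with `k ≥ p` are irrelevant. -/
def IsQuasipolynomial (a : ℕ → ℚ) (d : ℕ) (c : ℝ) : Prop :=
  ∃ p : ℕ, 0 < p ∧ ∃ f : ℕ → ℚ[X],
    (∀ k < p, (f k).degree = (d : WithBot ℕ) ∧ ((f k).leadingCoeff : ℝ) = c) ∧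
      ∀ n : ℕ, a n = (f (n % p)).eval (n : ℚ)

lemma degree_eq_and_leadingCoeff_eq_of_tendsto {P : ℝ[X]} {d : ℕ} {c : ℝ} (hc : c ≠ 0)
    {u : ℕ → ℝ} (hu : Tendsto u atTop atTop)
    (h : Tendsto (fun j => P.eval (u j) / u j ^ d) atTop (𝓝 c)) :
    P.degree = d ∧ P.leadingCoeff = c := by
  have hX : (X ^ d : ℝ[X]).degree = d := degree_X_pow d
  replace h : Tendsto ((fun x => P.eval x / (X ^ d : ℝ[X]).eval x) ∘ u) atTop (𝓝 c) := by
    simpa only [Function.comp_def, eval_pow, eval_X] using h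
  rcases lt_trichotomy P.degree (X ^ d : ℝ[X]).degree with hlt | heq | hgt
  · exact absurd (tendsto_nhds_unique h ((div_tendsto_atTop_zero_of_degree_lt P _ hlt).comp hu)) hc
  · have := (div_tendsto_atTop_leadingCoeff_div_of_degree_eq P _ heq).comp hu
    exact ⟨heq.trans hX, by simpa using (tendsto_nhds_unique h this).symm⟩
  · have := (abs_div_tendsto_atTop_atTop_of_degree_gt P _ hgt (pow_ne_zero _ X_ne_zero)).comp hu
    exact absurd this (not_tendsto_atTop_of_tendsto_nhds h.abs)

lemma isQuasipolynomial_of_tendsto {τ : ℤ → ℚ} (hτ : τ ∈ quasipoly) {d : ℕ} {c : ℝ} (hc : c ≠ 0)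
    (h : Tendsto (fun n : ℕ => (τ n : ℝ) / (n : ℝ) ^ d) atTop (𝓝 c)) :
    IsQuasipolynomial (fun n => τ n) d c := by
  obtain ⟨N, hN, P, hP⟩ := hτ
  lift N to ℕ using hN.le
  replace hN : 0 < N := by exact_mod_cast hN
  refine ⟨N, hN, fun k => P k, fun k hk => ?_, fun n => by simp [hP]⟩
  have hu : Tendsto (fun j => k + N * j) atTop atTop :=
    tendsto_atTop_mono (fun j => (Nat.le_mul_of_pos_left j hN).trans (Nat.le_add_left _ k))
      tendsto_id
  have hval : ∀ j, ((P k).map (algebraMap ℚ ℝ)).eval ((k + N * j : ℕ) : ℝ) =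
      (τ (k + N * j : ℕ) : ℝ) := fun j => by
    have hmod : ((k + N * j : ℕ) : ℤ) % N = k := by
      exact_mod_cast (Nat.add_mul_mod_self_left k N j).trans (Nat.mod_eq_of_lt hk)
    rw [hP, hmod, eval_natCast_map]
    simp
  have := degree_eq_and_leadingCoeff_eq_of_tendsto (P := (P k).map (algebraMap ℚ ℝ)) hc
    (tendsto_natCast_atTop_atTop.comp hu)
    (by simpa only [Function.comp_def, hval] using h.comp hu)
  simpa using this

lemma IsQuasipolynomial.comp_succ {a : ℕ → ℚ} {d : ℕ} {c : ℝ} (h : IsQuasipolynomial a d c) :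
    IsQuasipolynomial (fun n => a (n + 1)) d c := by
  obtain ⟨p, hp, f, hf, ha⟩ := h
  refine ⟨p, hp, fun k => taylor 1 (f ((k + 1) % p)), fun k _ => ?_, fun n => ?_⟩
  · simpa only [degree_taylor, leadingCoeff_taylor] using hf _ (Nat.mod_lt _ hp)
  · simp [ha, taylor_eval]

lemma IsQuasipolynomial.const_mul {a : ℕ → ℚ} {d : ℕ} {c : ℝ} (h : IsQuasipolynomial a d c) {r : ℚ}
    (hr : r ≠ 0) : IsQuasipolynomial (fun n => r * a n) d (r * c) := by
  obtain ⟨p, hp, f, hf, ha⟩ := h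
  refine ⟨p, hp, fun k => C r * f k, fun k hk => ?_, fun n => by simp [ha]⟩
  simp [degree_C_mul hr, hf k hk]

end IsQuasipolynomial

/-! ### Counting lattice points in dilates -/

section LatticeCount

open Filter Topology

variable {ι : Type*} {U : Set (ι → ℝ)}

/-- The number of lattice points in the dilate `t • U`. -/
noncomputable def latticeCount (U : Set (ι → ℝ)) (t : ℝ) : ℕ :=
  {z : ι → ℤ | (fun i => (z i : ℝ)) ∈ t • U}.ncard

/-- The lattice points in the open cone over `{1} × U`, whose slice at height `t` consists of the
lattice points of `t • U`. -/
def latticeCone (U : Set (ι → ℝ)) : Set (ℤ × (ι → ℤ)) :=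
  {x | 0 < x.1 ∧ (fun i => (x.2 i : ℝ)) ∈ (x.1 : ℝ) • U}

lemma card_inter_inv_smul_span_eq_latticeCount [Finite ι] (U : Set (ι → ℝ)) {n : ℕ} (hn : 0 < n) :
    Nat.card ↑(U ∩ (n : ℝ)⁻¹ • (Submodule.span ℤ (Set.range (Pi.basisFun ℝ ι)) : Set (ι → ℝ))) =
      latticeCount U n := by
  cases nonempty_fintype ι
  have : NeZero n := ⟨hn.ne'⟩
  have hn0 : (n : ℝ) ≠ 0 := by positivity
  have himage : U ∩ (n : ℝ)⁻¹ • (Submodule.span ℤ (Set.range (Pi.basisFun ℝ ι)) : Set (ι → ℝ)) =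
      (fun (z : ι → ℤ) i => (n : ℝ)⁻¹ * (z i : ℝ)) '' {z | (fun i => (z i : ℝ)) ∈ (n : ℝ) • U} := by
    ext x
    constructor
    · rintro ⟨hx, hspan⟩
      choose z hz using (BoxIntegral.unitPartition.mem_smul_span_iff (v := x)).1 hspan
      have hz : (fun i => (z i : ℝ)) = (n : ℝ) • x := funext hz
      refine ⟨z, ?_, funext fun i => ?_⟩
      · rw [Set.mem_ofPred_eq, hz]
        exact Set.smul_mem_smul_set hx
      simp [congrFun hz i, hn0]
    · rintro ⟨z, ⟨x, hx, hxz⟩, rfl⟩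
      have hz : (fun i => (n : ℝ)⁻¹ * (z i : ℝ)) = x := by
        ext i
        simp [← congrFun hxz i, hn0]
      refine ⟨?_, BoxIntegral.unitPartition.mem_smul_span_iff.2
        fun i => ⟨z i, by simp [hn0]⟩⟩
      simpa only [hz] using hx
  rw [Nat.card_coe_set_eq, himage, Set.ncard_image_of_injective, latticeCount]
  intro z w h
  ext i
  simpa [hn0] using congrFun h i

theorem tendsto_latticeCount_div_pow [Fintype ι] (hb : Bornology.IsBounded U)
    (hm : MeasurableSet U) (hfr : volume (frontier U) = 0) :
    Tendsto (fun n : ℕ => (latticeCount U n : ℝ) / (n : ℝ) ^ Fintype.card ι) atTop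
      (𝓝 (volume.real U)) := by
  refine (tendsto_card_div_pow_atTop_volume U hb hm hfr).congr' ?_
  filter_upwards [eventually_gt_atTop 0] with n hn
  rw [card_inter_inv_smul_span_eq_latticeCount U hn]

lemma exists_nat_forall_abs_lt [Finite ι] (hb : Bornology.IsBounded U) :
    ∃ R : ℕ, ∀ x ∈ U, ∀ i, |x i| < R := by
  cases nonempty_fintype ι
  obtain ⟨r, hr⟩ := hb.exists_norm_le
  obtain ⟨R, hR⟩ := exists_nat_gt r
  exact ⟨R, fun x hx i => (norm_le_pi_norm x i).trans_lt ((hr x hx).trans_lt hR)⟩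

lemma mem_piFinset_of_mem_latticeCone [Fintype ι] [DecidableEq ι] {R : ℕ}
    (hR : ∀ x ∈ U, ∀ i, |x i| < R) {t : ℤ} {z : ι → ℤ} (h : (t, z) ∈ latticeCone U) :
    z ∈ Fintype.piFinset fun _ => Finset.Ico (-(R : ℤ) * t) (R * t) := by
  obtain ⟨ht, x, hx, hxz⟩ := h
  replace ht : (0 : ℝ) < t := by exact_mod_cast ht
  refine Fintype.mem_piFinset.mpr fun i => Finset.mem_Ico.mpr ?_
  have hzi : t * x i = z i := congrFun hxz i
  have hxi := abs_lt.mp (hR x hx i)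
  have hlow : (-(R : ℤ) * t : ℝ) < z i := by rw [← hzi]; push_cast; nlinarith
  have hupp : (z i : ℝ) < (R * t : ℝ) := by rw [← hzi]; nlinarith
  exact ⟨by exact_mod_cast hlow.le, by exact_mod_cast hupp⟩

theorem exists_quasipoly_eq_latticeCount [Finite ι] (hb : Bornology.IsBounded U)
    (hdef : Definable (latticeCone U)) :
    ∃ τ ∈ quasipoly, ∀ n : ℕ, 0 < n → (latticeCount U n : ℚ) = τ n := by
  classical
  cases nonempty_fintype ι
  obtain ⟨R, hR⟩ := exists_nat_forall_abs_lt hb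
  obtain ⟨τ, hτ, heq⟩ := exists_quasipoly_eqOn_pos (sum_piFinset_mem_piecewiseQuasipoly
    (-(R : ℤ) • AddMonoidHom.id ℤ) ((R : ℤ) • AddMonoidHom.id ℤ) hdef)
  refine ⟨τ, hτ, fun n hn => ?_⟩
  rw [← heq (Int.natCast_pos.mpr hn), latticeCount]
  have hset : {z : ι → ℤ | (fun i => (z i : ℝ)) ∈ (n : ℝ) • U} =
      ↑((Fintype.piFinset fun _ : ι => Finset.Ico (-(R : ℤ) * n) (R * n)).filter
        fun z => ((n : ℤ), z) ∈ latticeCone U) := by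
    ext z
    have hiff : ((n : ℤ), z) ∈ latticeCone U ↔ (fun i => (z i : ℝ)) ∈ (n : ℝ) • U := by
      simp [latticeCone, hn]
    rw [Finset.mem_coe, Finset.mem_filter, hiff]
    exact ⟨fun hz => ⟨mem_piFinset_of_mem_latticeCone hR (hiff.mpr hz), hz⟩, And.right⟩
  rw [hset, Set.ncard_coe_finset, Finset.natCast_card_filter]
  simp [Set.indicator_apply]

theorem isQuasipolynomial_latticeCount [Fintype ι] (hb : Bornology.IsBounded U)
    (hm : MeasurableSet U) (hfr : volume (frontier U) = 0) (hvol : volume.real U ≠ 0)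
    (hdef : Definable (latticeCone U)) :
    IsQuasipolynomial (fun n => latticeCount U (n + 1)) (Fintype.card ι) (volume.real U) := by
  obtain ⟨τ, hτ, hcount⟩ := exists_quasipoly_eq_latticeCount hb hdef
  have hlim : Tendsto (fun n : ℕ => (τ n : ℝ) / (n : ℝ) ^ Fintype.card ι) atTop
      (𝓝 (volume.real U)) := by
    refine (tendsto_latticeCount_div_pow hb hm hfr).congr' ?_
    filter_upwards [eventually_gt_atTop 0] with n hn
    rw [← hcount n hn, Rat.cast_natCast]
  convert (isQuasipolynomial_of_tendsto hτ hvol hlim).comp_succ using 2 with n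
  rw [← hcount (n + 1) n.succ_pos, Nat.cast_succ]

end LatticeCount

/-! ### Removing hyperplanes -/

section Arrangement

variable {ι : Type*} [Fintype ι]

/-- The complement in `ℝ^ι` of the arrangement of central hyperplanes with integral normal vectors
`a ∈ A`. -/
def arrangementCompl (A : Finset (ι → ℤ)) : Set (ι → ℝ) :=
  {x | ∀ a ∈ A, (fun i => (a i : ℝ)) ⬝ᵥ x ≠ 0}

variable {A : Finset (ι → ℤ)}

lemma smul_arrangementCompl {t : ℝ} (ht : t ≠ 0) :
    t • arrangementCompl A = arrangementCompl A := by
  ext x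
  simp [arrangementCompl, Set.mem_smul_set_iff_inv_smul_mem₀ ht, ht]

lemma intCast_mem_arrangementCompl {z : ι → ℤ} :
    (fun i => (z i : ℝ)) ∈ arrangementCompl A ↔ ∀ a ∈ A, a ⬝ᵥ z ≠ 0 := by
  refine forall₂_congr fun a _ => ?_
  rw [← Int.cast_ne_zero (α := ℝ)]
  exact Eq.congr_left (RingHom.map_dotProduct (Int.castRingHom ℝ) a z).symm |>.not

lemma isOpen_arrangementCompl (A : Finset (ι → ℤ)) : IsOpen (arrangementCompl A) := by
  have hinter : arrangementCompl A = ⋂ a ∈ A, {x | (fun i => (a i : ℝ)) ⬝ᵥ x ≠ 0} := by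
    ext x
    simp [arrangementCompl]
  rw [hinter]
  exact isOpen_biInter_finset fun a _ => isOpen_ne_fun (by fun_prop) continuous_const

lemma volume_hyperplane_eq_zero {a : ι → ℝ} (ha : a ≠ 0) : volume {x | a ⬝ᵥ x = 0} = 0 := by
  refine Measure.addHaar_submodule volume (LinearMap.ker (dotProductBilin ℝ ℝ a)) fun htop => ha ?_
  have : a ∈ LinearMap.ker (dotProductBilin ℝ ℝ a) := htop ▸ Submodule.mem_top
  exact dotProduct_self_eq_zero.mp this

lemma volume_compl_arrangementCompl (hA : 0 ∉ A) : volume (arrangementCompl A)ᶜ = 0 := by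
  have hunion : (arrangementCompl A)ᶜ = ⋃ a ∈ A, {x | (fun i => (a i : ℝ)) ⬝ᵥ x = 0} := by
    ext x
    simp [arrangementCompl]
  rw [hunion]
  refine (measure_biUnion_null_iff A.countable_toSet).2 fun a ha =>
    volume_hyperplane_eq_zero fun h0 => hA ?_
  convert Finset.mem_coe.mp ha
  ext i
  have hai : (a i : ℝ) = 0 := congrFun h0 i
  exact_mod_cast hai.symm

lemma volume_frontier_inter_arrangementCompl {U : Set (ι → ℝ)} (hfr : volume (frontier U) = 0)
    (hA : 0 ∉ A) : volume (frontier (U ∩ arrangementCompl A)) = 0 := by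
  refine measure_mono_null (frontier_inter_subset _ _) (measure_union_null ?_ ?_)
  · exact measure_mono_null Set.inter_subset_left hfr
  · refine measure_mono_null ?_ (volume_compl_arrangementCompl hA)
    rw [(isOpen_arrangementCompl A).frontier_eq]
    exact fun x hx => hx.2.2

lemma definable_latticeCone_inter_arrangementCompl {U : Set (ι → ℝ)}
    (hU : Definable (latticeCone U)) : Definable (latticeCone (U ∩ arrangementCompl A)) := by
  have hcone : latticeCone (U ∩ arrangementCompl A) =
      latticeCone U ∩ ⋂ a ∈ A, {x | a ⬝ᵥ x.2 ≠ 0} := by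
    ext ⟨t, z⟩
    simp only [latticeCone, Set.mem_ofPred_eq, Set.mem_inter_iff, Set.mem_iInter, and_assoc]
    refine and_congr_right fun ht => ?_
    have ht : (t : ℝ) ≠ 0 := by exact_mod_cast ht.ne'
    rw [Set.smul_set_inter₀ ht, smul_arrangementCompl ht, Set.mem_inter_iff,
      intCast_mem_arrangementCompl]
  rw [hcone]
  exact hU.inter (.biInter fun a _ => definable_ne_zero
    ((dotProductBilin ℤ ℤ a).toAddMonoidHom.comp (.snd ℤ (ι → ℤ))))

theorem isQuasipolynomial_latticeCount_inter_arrangementCompl {U : Set (ι → ℝ)}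
    (hb : Bornology.IsBounded U) (hm : MeasurableSet U) (hfr : volume (frontier U) = 0)
    (hvol : volume.real U ≠ 0) (hdef : Definable (latticeCone U)) (hA : 0 ∉ A) :
    IsQuasipolynomial (fun n => latticeCount (U ∩ arrangementCompl A) (n + 1)) (Fintype.card ι)
      (volume.real U) := by
  have hreal : volume.real (U ∩ arrangementCompl A) = volume.real U := by
    rw [Measure.real, measure_inter_conull (volume_compl_arrangementCompl hA), Measure.real]
  rw [← hreal] at hvol ⊢
  exact isQuasipolynomial_latticeCount (hb.subset Set.inter_subset_left)
    (hm.inter (isOpen_arrangementCompl A).measurableSet)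
    (volume_frontier_inter_arrangementCompl hfr hA) hvol
    (definable_latticeCone_inter_arrangementCompl hdef)

end Arrangement

/-! ### The interior of a convex polygon -/

section Polygon

lemma mem_interior_iff_forall_exists_lt {E : Type*} [NormedAddCommGroup E] [NormedSpace ℝ E]
    {s : Set E} (hs : Convex ℝ s) (hne : (interior s).Nonempty) {x : E} :
    x ∈ interior s ↔ ∀ f : E →L[ℝ] ℝ, f ≠ 0 → ∃ y ∈ s, f x < f y := by
  constructor
  · intro hx f hf
    by_contra! hle
    have hmax : IsLocalMax f x :=
      Filter.eventually_of_mem (mem_interior_iff_mem_nhds.mp hx) fun y hy => hle y hy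
    exact hf (hmax.hasFDerivAt_eq_zero f.hasFDerivAt)
  · intro h
    by_contra hx
    obtain ⟨f, hf, hle⟩ := geometric_hahn_banach_of_nonempty_interior_point hs hx hne
    obtain ⟨y, hy, hlt⟩ := h f hf
    exact (hle y hy).not_gt hlt

/-- The two-dimensional cross product, i.e. the determinant of the matrix with rows `a` and `b`. It
detects both the side of a line on which a point lies and whether two points attack each other. -/
def cross {R : Type*} [CommRing R] (a b : R × R) : R :=
  a.1 * b.2 - a.2 * b.1

lemma sum_sq_mul_cross {R : Type*} [CommRing R] (a v w : R × R) :
    (a.1 ^ 2 + a.2 ^ 2) * cross v w =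
      (a.1 * v.1 + a.2 * v.2) * cross a w - (a.1 * w.1 + a.2 * w.2) * cross a v := by
  simp only [cross]
  ring

lemma cross_neg_left {R : Type*} [CommRing R] (a b : R × R) : cross (-a) b = -cross a b := by
  simp only [cross, Prod.fst_neg, Prod.snd_neg]
  ring

lemma sum_sq_pos {a : ℝ × ℝ} (ha : a ≠ 0) : 0 < a.1 ^ 2 + a.2 ^ 2 := by
  rcases eq_or_ne a.1 0 with h1 | h1
  · have h2 : a.2 ≠ 0 := fun h2 => ha (Prod.ext h1 h2)
    positivity
  · positivity

lemma exists_cross_eq (f : ℝ × ℝ →L[ℝ] ℝ) : ∃ a, ∀ y, f y = cross a y := by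
  refine ⟨(f (0, 1), -f (1, 0)), fun y => ?_⟩
  calc f y = f (y.1 • (1, 0) + y.2 • (0, 1)) := by simp
    _ = cross (f (0, 1), -f (1, 0)) y := by
      rw [map_add, map_smul, map_smul]
      simp only [cross, smul_eq_mul]
      ring

lemma mem_interior_convexHull_iff_forall_exists_cross_pos {V : Set (ℝ × ℝ)}
    (hne : (interior (convexHull ℝ V)).Nonempty) {x : ℝ × ℝ} :
    x ∈ interior (convexHull ℝ V) ↔ ∀ a ≠ 0, ∃ v ∈ V, 0 < cross a (v - x) := by
  rw [mem_interior_iff_forall_exists_lt (convex_convexHull ℝ V) hne]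
  constructor
  · intro h a ha
    let f : ℝ × ℝ →L[ℝ] ℝ :=
      a.1 • ContinuousLinearMap.snd ℝ ℝ ℝ - a.2 • ContinuousLinearMap.fst ℝ ℝ ℝ
    have hf : f ≠ 0 := fun h0 => (sum_sq_pos ha).ne' <| by
      have : f (-a.2, a.1) = 0 := by simp [h0]
      simpa [f, sq] using this
    obtain ⟨y, hy, hlt⟩ := h f hf
    obtain ⟨v, hv, hle⟩ := (f.toLinearMap.convexOn convex_univ).exists_ge_of_mem_convexHull
      (Set.subset_univ V) hy
    refine ⟨v, hv, ?_⟩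
    have : f v - f x = cross a (v - x) := by rw [← map_sub]; rfl
    rw [← this, sub_pos]
    exact hlt.trans_le hle
  · intro h f hf
    obtain ⟨a, ha⟩ := exists_cross_eq f
    have ha0 : a ≠ 0 := fun h0 => hf <| by
      ext <;> simp [ha, h0, cross]
    obtain ⟨v, hv, hlt⟩ := h a ha0
    exact ⟨v, subset_convexHull ℝ V hv, by rwa [← sub_pos, ← map_sub, ha]⟩

lemma exists_cross_nonneg_of_cross_neg {W : Finset (ℝ × ℝ)} {a : ℝ × ℝ}
    (hW : W.Nonempty) (h : ∀ w ∈ W, cross a w < 0) : ∃ v ∈ W, ∀ w ∈ W, 0 ≤ cross v w := by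
  obtain ⟨w₀, hw₀⟩ := hW
  have ha : a ≠ 0 := by
    rintro rfl
    simpa [cross] using h w₀ hw₀
  obtain ⟨v, hv, hmax⟩ := W.exists_max_image
    (fun v => (a.1 * v.1 + a.2 * v.2) / cross a v) ⟨w₀, hw₀⟩
  refine ⟨v, hv, fun w hw => nonneg_of_mul_nonneg_right ?_ (sum_sq_pos ha)⟩
  rw [sum_sq_mul_cross, sub_nonneg]
  have := hmax w hw
  rwa [div_le_iff_of_neg (h w hw), div_mul_eq_mul_div, div_le_iff_of_neg (h v hv)] at this

/-- Rotating a supporting line through the origin until it hits a point of `W`. -/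
lemma exists_cross_semidefinite {W : Finset (ℝ × ℝ)} (hW : ∃ w ∈ W, w ≠ 0)
    {a : ℝ × ℝ} (ha : a ≠ 0) (h : ∀ w ∈ W, cross a w ≤ 0) :
    ∃ v ∈ W, v ≠ 0 ∧ ((∀ w ∈ W, cross v w ≤ 0) ∨ ∀ w ∈ W, 0 ≤ cross v w) := by
  classical
  by_cases hline : ∃ v ∈ W, v ≠ 0 ∧ cross a v = 0
  · obtain ⟨v, hv, hv0, hav⟩ := hline
    have hcross : ∀ w, (a.1 ^ 2 + a.2 ^ 2) * cross v w = (a.1 * v.1 + a.2 * v.2) * cross a w := by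
      intro w
      rw [sum_sq_mul_cross, hav, mul_zero, sub_zero]
    refine ⟨v, hv, hv0, (le_total 0 (a.1 * v.1 + a.2 * v.2)).imp ?_ ?_⟩ <;> intro hdot w hw
    · refine nonpos_of_mul_nonpos_right ?_ (sum_sq_pos ha)
      exact hcross w ▸ mul_nonpos_of_nonneg_of_nonpos hdot (h w hw)
    · refine nonneg_of_mul_nonneg_right ?_ (sum_sq_pos ha)
      exact hcross w ▸ mul_nonneg_of_nonpos_of_nonpos hdot (h w hw)
  · push Not at hline
    obtain ⟨w₀, hw₀, hw₀0⟩ := hW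
    obtain ⟨v, hv, hcross⟩ := exists_cross_nonneg_of_cross_neg (W := W.filter (· ≠ 0)) (a := a)
      ⟨w₀, by simp [hw₀, hw₀0]⟩ fun w hw => by
        rw [Finset.mem_filter] at hw
        exact (h w hw.1).lt_of_ne (hline w hw.1 hw.2)
    rw [Finset.mem_filter] at hv
    refine ⟨v, hv.1, hv.2, .inr fun w hw => ?_⟩
    rcases eq_or_ne w 0 with rfl | hw0
    · simp [cross]
    · exact hcross w (by simp [hw, hw0])

theorem mem_interior_convexHull_iff_cross {V : Finset (ℝ × ℝ)}
    (hne : (interior (convexHull ℝ (V : Set (ℝ × ℝ)))).Nonempty) {x : ℝ × ℝ} :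
    x ∈ interior (convexHull ℝ (V : Set (ℝ × ℝ))) ↔ ∀ v ∈ V, v ≠ x →
      (∃ w ∈ V, 0 < cross (v - x) (w - x)) ∧ ∃ w ∈ V, cross (v - x) (w - x) < 0 := by
  classical
  constructor
  · rw [mem_interior_convexHull_iff_forall_exists_cross_pos hne]
    refine fun hx v _ hvx => ⟨hx _ (sub_ne_zero.mpr hvx), ?_⟩
    simpa only [cross_neg_left, neg_pos, Finset.mem_coe] using
      hx _ (neg_ne_zero.mpr (sub_ne_zero.mpr hvx))
  · intro h
    by_contra hx
    rw [mem_interior_convexHull_iff_forall_exists_cross_pos hne] at hx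
    push Not at hx
    obtain ⟨a, ha, hle⟩ := hx
    have hV : ∃ v ∈ V, v ≠ x := by
      obtain ⟨y, hy⟩ := hne
      have hcross := (mem_interior_convexHull_iff_forall_exists_cross_pos ⟨y, hy⟩).mp hy
      by_contra! hV
      obtain ⟨v, hv, hpos⟩ := hcross a ha
      obtain ⟨w, hw, hneg⟩ := hcross (-a) (neg_ne_zero.mpr ha)
      rw [cross_neg_left, hV w hw] at hneg
      rw [hV v hv] at hpos
      linarith
    obtain ⟨u, hu, hu0, hcross⟩ := exists_cross_semidefinite (W := V.image (· - x)) (a := a)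
      (by simpa only [Finset.exists_mem_image, sub_ne_zero] using hV) ha
      (by simpa only [Finset.forall_mem_image, Finset.mem_coe] using hle)
    obtain ⟨v, hv, rfl⟩ := Finset.mem_image.mp hu
    simp only [Finset.forall_mem_image] at hcross
    obtain ⟨⟨w, hw, hpos⟩, w', hw', hneg⟩ := h v hv (sub_ne_zero.mp hu0)
    exact hcross.elim (fun hcross => (hcross hw).not_gt hpos)
      fun hcross => (hcross hw').not_gt hneg

end Polygon

section RationalPolygon

/-- The inclusion of the lattice `ℤ²` in the plane. -/
def realPoint : ℤ × ℤ →+ ℝ × ℝ :=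
  (Int.castAddHom ℝ).prodMap (Int.castAddHom ℝ)

lemma realPoint_injective : Function.Injective realPoint :=
  Int.cast_injective.prodMap Int.cast_injective

lemma realPoint_zsmul (k : ℤ) (z : ℤ × ℤ) : realPoint (k • z) = (k : ℝ) • realPoint z := by
  rw [map_zsmul, Int.cast_smul_eq_zsmul]

lemma cross_realPoint (a b : ℤ × ℤ) : cross (realPoint a) (realPoint b) = (cross a b : ℤ) := by
  simp [cross, realPoint]

lemma realPoint_mem_interior_convexHull_iff {C : Finset (ℤ × ℤ)}
    (hne : (interior (convexHull ℝ (realPoint '' C))).Nonempty) {z : ℤ × ℤ} :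
    realPoint z ∈ interior (convexHull ℝ (realPoint '' C)) ↔ ∀ v ∈ C, v ≠ z →
      (∃ w ∈ C, 0 < cross (v - z) (w - z)) ∧ ∃ w ∈ C, cross (v - z) (w - z) < 0 := by
  classical
  rw [← Finset.coe_image] at hne ⊢
  rw [mem_interior_convexHull_iff_cross hne]
  simp only [Finset.forall_mem_image, Finset.exists_mem_image, realPoint_injective.ne_iff,
    ← map_sub, cross_realPoint, Int.cast_pos, Int.cast_lt_zero]

lemma cross_zsmul_sub (t : ℤ) (v w z : ℤ × ℤ) :
    cross (t • v - z) (t • w - z) = t • (t * cross v w - cross (v - w) z) := by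
  simp only [cross, Prod.fst_sub, Prod.snd_sub, Prod.smul_fst, Prod.smul_snd, smul_eq_mul]
  ring

lemma realPoint_mem_smul_interior_convexHull_iff {C : Finset (ℤ × ℤ)}
    (hne : (interior (convexHull ℝ (realPoint '' C))).Nonempty) {t : ℤ} (ht : 0 < t)
    {z : ℤ × ℤ} :
    realPoint z ∈ (t : ℝ) • interior (convexHull ℝ (realPoint '' C)) ↔ ∀ v ∈ C, t • v ≠ z →
      (∃ w ∈ C, 0 < t * cross v w - cross (v - w) z) ∧
        ∃ w ∈ C, t * cross v w - cross (v - w) z < 0 := by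
  classical
  have ht0 : (t : ℝ) ≠ 0 := by exact_mod_cast ht.ne'
  have hdilate : (t : ℝ) • interior (convexHull ℝ (realPoint '' C)) =
      interior (convexHull ℝ (realPoint '' (C.image (t • ·) : Finset (ℤ × ℤ)))) := by
    rw [← interior_smul₀ ht0, ← convexHull_smul, Finset.coe_image, ← Set.image_smul,
      Set.image_image, Set.image_image]
    simp only [realPoint_zsmul]
  have hne' := hdilate ▸ hne.smul_set (a := (t : ℝ))
  rw [hdilate, realPoint_mem_interior_convexHull_iff hne']
  simp only [Finset.forall_mem_image, Finset.exists_mem_image, cross_zsmul_sub,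
    smul_pos_iff_of_pos_left ht, smul_neg_iff_of_pos_left ht]

/-- The lattice points in the open cone over `{1} × A`, whose slice at height `t` consists of the
lattice points of `t • A`; the analogue of `latticeCone` for the plane `ℝ × ℝ`. -/
def planarLatticeCone (A : Set (ℝ × ℝ)) : Set (ℤ × (ℤ × ℤ)) :=
  {x | 0 < x.1 ∧ realPoint x.2 ∈ (x.1 : ℝ) • A}

lemma definable_zsmul_eq (v : ℤ × ℤ) :
    Definable {x : ℤ × (ℤ × ℤ) | x.1 • v = x.2} := by
  let L₁ : ℤ × (ℤ × ℤ) →+ ℤ := .mk' (fun x => x.1 * v.1 - x.2.1) fun x y => by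
    simp only [Prod.fst_add, Prod.snd_add]
    ring
  let L₂ : ℤ × (ℤ × ℤ) →+ ℤ := .mk' (fun x => x.1 * v.2 - x.2.2) fun x y => by
    simp only [Prod.fst_add, Prod.snd_add]
    ring
  convert (definable_ne_zero L₁).compl.inter (definable_ne_zero L₂).compl using 1
  ext x
  simp [L₁, L₂, Prod.ext_iff, sub_eq_zero]

lemma definable_planarLatticeCone_of_lattice_polygon {C : Finset (ℤ × ℤ)}
    (hne : (interior (convexHull ℝ (realPoint '' C))).Nonempty) :
    Definable (planarLatticeCone (interior (convexHull ℝ (realPoint '' C)))) := by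
  let K (v w : ℤ × ℤ) : ℤ × (ℤ × ℤ) →+ ℤ :=
    .mk' (fun x => x.1 * cross v w - cross (v - w) x.2) fun x y => by
      simp only [cross, Prod.fst_add, Prod.snd_add]
      ring
  convert (definable_pos (.fst ℤ (ℤ × ℤ))).inter <| .biInter (s := C) fun v _ =>
    (definable_zsmul_eq v).union <|
      (Definable.biUnion (s := C) fun w _ => definable_pos (K v w)).inter
        (.biUnion (s := C) fun w _ => definable_pos (-K v w)) using 1
  ext ⟨t, z⟩
  refine and_congr_right fun ht => ?_
  rw [realPoint_mem_smul_interior_convexHull_iff hne ht]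
  simp [K, or_iff_not_imp_left]

lemma exists_smul_eq_realPoint_image {V : Finset (ℝ × ℝ)}
    (hV : ∀ v ∈ V, ∃ a b : ℚ, v = ((a : ℝ), (b : ℝ))) :
    ∃ D : ℤ, D ≠ 0 ∧ ∃ C : Finset (ℤ × ℤ), (D : ℝ) • (V : Set (ℝ × ℝ)) = realPoint '' C := by
  classical
  choose! a b hab using hV
  obtain ⟨D, hD⟩ := IsLocalization.exist_integer_multiples_of_finset (nonZeroDivisors ℤ)
    (V.image a ∪ V.image b)
  have hlattice : ∀ v ∈ V, ∃ c, realPoint c = ((D : ℤ) : ℝ) • v := by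
    intro v hv
    obtain ⟨m, hm⟩ := hD (a v) (by simp [Finset.mem_image_of_mem a hv])
    obtain ⟨n, hn⟩ := hD (b v) (by simp [Finset.mem_image_of_mem b hv])
    simp only [eq_intCast, zsmul_eq_mul] at hm hn
    have hm' : (m : ℝ) = (D : ℤ) * (a v : ℝ) := by exact_mod_cast congrArg (Rat.cast : ℚ → ℝ) hm
    have hn' : (n : ℝ) = (D : ℤ) * (b v : ℝ) := by exact_mod_cast congrArg (Rat.cast : ℚ → ℝ) hn
    refine ⟨(m, n), ?_⟩
    rw [hab v hv]
    exact Prod.ext hm' hn'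
  choose! c hc using hlattice
  refine ⟨D, nonZeroDivisors.coe_ne_zero D, V.image c, ?_⟩
  rw [Finset.coe_image, Set.image_image, ← Set.image_smul]
  exact (Set.image_congr hc).symm

theorem definable_planarLatticeCone_interior {V : Finset (ℝ × ℝ)}
    (hV : ∀ v ∈ V, ∃ a b : ℚ, v = ((a : ℝ), (b : ℝ)))
    (hne : (interior (convexHull ℝ (V : Set (ℝ × ℝ)))).Nonempty) :
    Definable (planarLatticeCone (interior (convexHull ℝ (V : Set (ℝ × ℝ))))) := by
  obtain ⟨D, hD, C, hC⟩ := exists_smul_eq_realPoint_image hV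
  have hD0 : (D : ℝ) ≠ 0 := by exact_mod_cast hD
  have hdilate : (D : ℝ) • interior (convexHull ℝ (V : Set (ℝ × ℝ))) =
      interior (convexHull ℝ (realPoint '' C)) := by
    rw [← interior_smul₀ hD0, ← convexHull_smul, hC]
  have hne' := hdilate ▸ hne.smul_set (a := (D : ℝ))
  convert (definable_planarLatticeCone_of_lattice_polygon hne').preimage
    ((AddMonoidHom.id ℤ).prodMap (zsmulAddGroupHom D)) using 1
  ext ⟨t, z⟩
  refine and_congr_right fun _ => ?_
  change _ ↔ realPoint (D • z) ∈ (t : ℝ) • _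
  rw [← hdilate, smul_comm, realPoint_zsmul, Set.smul_mem_smul_set_iff₀ hD0]

end RationalPolygon

/-! ### Configurations of nonattacking points -/

section Configurations

variable {κ : Type*}

/-- The `κ`-tuples of points of `A`, as vectors: the first coordinates of the points come before
their second coordinates. -/
def configurations (κ : Type*) (A : Set (ℝ × ℝ)) : Set (κ ⊕ κ → ℝ) :=
  {x | ∀ i, (x (.inl i), x (.inr i)) ∈ A}

variable {A : Set (ℝ × ℝ)}

lemma convex_configurations (hA : Convex ℝ A) : Convex ℝ (configurations κ A) :=
  fun _ hx _ hy _ _ ha hb hab i => hA (hx i) (hy i) ha hb hab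

lemma isOpen_configurations [Finite κ] (hA : IsOpen A) : IsOpen (configurations κ A) := by
  simp only [configurations, Set.ofPred_forall]
  exact isOpen_iInter_of_finite fun i => hA.preimage (by fun_prop)

lemma isBounded_configurations (hA : Bornology.IsBounded A) :
    Bornology.IsBounded (configurations κ A) := by
  refine (Bornology.IsBounded.pi (S := Sum.elim (fun _ => Prod.fst '' A) fun _ => Prod.snd '' A)
    ?_).subset fun x hx => Set.mem_univ_pi.2 ?_
  · rintro (_ | _)
    exacts [hA.image_fst, hA.image_snd]
  · rintro (i | i)
    exacts [⟨_, hx i, rfl⟩, ⟨_, hx i, rfl⟩]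

lemma smul_configurations {t : ℝ} (ht : t ≠ 0) :
    t • configurations κ A = configurations κ (t • A) := by
  ext x
  simp [configurations, Set.mem_smul_set_iff_inv_smul_mem₀ ht]

lemma definable_latticeCone_configurations [Finite κ] (hA : Definable (planarLatticeCone A)) :
    Definable (latticeCone (configurations κ A)) := by
  cases nonempty_fintype κ
  let point (i : κ) : ℤ × (κ ⊕ κ → ℤ) →+ ℤ × (ℤ × ℤ) :=
    (AddMonoidHom.id ℤ).prodMap ((Pi.evalAddMonoidHom _ (.inl i)).prod
      (Pi.evalAddMonoidHom _ (.inr i)))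
  convert (definable_pos (.fst ℤ (κ ⊕ κ → ℤ))).inter
    (.biInter (s := Finset.univ) fun i _ => hA.preimage (point i)) using 1
  ext ⟨t, z⟩
  refine and_congr_right fun ht => ?_
  have ht0 : (t : ℝ) ≠ 0 := by exact_mod_cast (ne_of_gt ht)
  rw [smul_configurations ht0]
  simp [configurations, planarLatticeCone, realPoint, point, show 0 < t from ht]

/-- The equivalence between tuples of points and vectors of coordinates underlying
`configurations`. -/
def pointsEquiv (κ R : Type*) : (κ ⊕ κ → R) ≃ (κ → R × R) :=
  (Equiv.sumPiEquivProdPi _).trans (Equiv.arrowProdEquivProdArrow κ _ _).symm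

lemma measurePreserving_pointsEquiv [Fintype κ] : MeasurePreserving (pointsEquiv κ ℝ) :=
  (volume_measurePreserving_arrowProdEquivProdArrow ℝ ℝ κ).symm.comp
    (volume_measurePreserving_sumPiEquivProdPi fun _ => ℝ)

lemma volume_configurations [Fintype κ] (hA : MeasurableSet A) :
    volume.real (configurations κ A) = volume.real A ^ Fintype.card κ := by
  have hpre : configurations κ A = pointsEquiv κ ℝ ⁻¹' Set.univ.pi fun _ => A := by
    ext x
    simp [configurations, pointsEquiv]
  rw [Measure.real, hpre, measurePreserving_pointsEquiv.measure_preimage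
    (MeasurableSet.univ_pi fun _ => hA).nullMeasurableSet, volume_pi_pi]
  simp [Measure.real]

section Attack

variable [DecidableEq κ] {M : Finset (ℤ × ℤ)}

/-- A normal vector of the hyperplane formed by the configurations whose points `i` and `j` lie on a
common line parallel to `m`. -/
def attackNormal (m : ℤ × ℤ) (i j : κ) : κ ⊕ κ → ℤ :=
  Sum.elim (m.2 • (Pi.single i 1 - Pi.single j 1)) (-m.1 • (Pi.single i 1 - Pi.single j 1))

lemma attackNormal_ne_zero {m : ℤ × ℤ} (hm : m ≠ 0) {i j : κ} (hij : i ≠ j) :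
    attackNormal m i j ≠ 0 := by
  refine fun h => hm (Prod.ext ?_ ?_)
  · simpa [attackNormal, hij] using congrFun h (.inr i)
  · simpa [attackNormal, hij] using congrFun h (.inl i)

variable [Fintype κ]

lemma attackNormal_dotProduct (m : ℤ × ℤ) (i j : κ) (z : κ ⊕ κ → ℤ) :
    attackNormal m i j ⬝ᵥ z = cross (pointsEquiv κ ℤ z i - pointsEquiv κ ℤ z j) m := by
  conv_lhs => rw [← Sum.elim_comp_inl_inr z]
  simp only [attackNormal, sumElim_dotProduct_sumElim, smul_dotProduct, sub_dotProduct,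
    single_one_dotProduct, Function.comp_apply, smul_eq_mul, cross]
  simp only [neg_mul, pointsEquiv, Equiv.trans_apply, Equiv.sumPiEquivProdPi_apply,
    Equiv.arrowProdEquivProdArrow_symm_apply, Prod.mk_sub_mk]
  ring

/-- The normal vectors of the hyperplanes formed by the configurations in which some two points
attack each other by a move in `M`. -/
def attackNormals (κ : Type*) [Fintype κ] [DecidableEq κ] (M : Finset (ℤ × ℤ)) :
    Finset (κ ⊕ κ → ℤ) :=
  (M ×ˢ Finset.univ.offDiag).image fun x => attackNormal x.1 x.2.1 x.2.2

lemma zero_notMem_attackNormals (hM : 0 ∉ M) : 0 ∉ attackNormals κ M := by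
  simp only [attackNormals, Finset.mem_image, Finset.mem_product, Finset.mem_offDiag]
  rintro ⟨⟨m, i, j⟩, ⟨hm, -, -, hij⟩, h0⟩
  exact attackNormal_ne_zero (ne_of_mem_of_not_mem hm hM) hij h0

/-- The lattice points `z` and `w` do not attack each other by any of the moves in `M`. -/
def Nonattacking (M : Finset (ℤ × ℤ)) (z w : ℤ × ℤ) : Prop :=
  ∀ m ∈ M, cross (z - w) m ≠ 0

lemma forall_mem_attackNormals_dotProduct_ne_zero_iff {z : κ ⊕ κ → ℤ} :
    (∀ a ∈ attackNormals κ M, a ⬝ᵥ z ≠ 0) ↔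
      Pairwise (Function.onFun (Nonattacking M) (pointsEquiv κ ℤ z)) := by
  simp only [attackNormals, Finset.forall_mem_image, Finset.mem_product, Finset.mem_offDiag,
    Finset.mem_univ, true_and, attackNormal_dotProduct]
  exact ⟨fun h i j hij m hm => h (x := (m, i, j)) ⟨hm, hij⟩, fun h x hx => h hx.2 x.1 hx.1⟩

lemma latticeCount_configurations_inter_arrangementCompl {t : ℝ} (ht : t ≠ 0) :
    latticeCount (configurations κ A ∩ arrangementCompl (attackNormals κ M)) t =
      {w : κ → ℤ × ℤ | (∀ i, realPoint (w i) ∈ t • A) ∧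
        Pairwise (Function.onFun (Nonattacking M) w)}.ncard := by
  refine Nat.card_congr ((pointsEquiv κ ℤ).subtypeEquiv fun z => ?_)
  simp only [Set.mem_ofPred_eq]
  rw [Set.smul_set_inter₀ ht, smul_arrangementCompl ht, smul_configurations ht, Set.mem_inter_iff,
    intCast_mem_arrangementCompl, forall_mem_attackNormals_dotProduct_ne_zero_iff]
  rfl

end Attack

theorem isQuasipolynomial_ncard_nonattacking_tuples [Fintype κ] {M : Finset (ℤ × ℤ)}
    (hc : Convex ℝ A) (ho : IsOpen A) (hb : Bornology.IsBounded A) (hne : A.Nonempty)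
    (hdef : Definable (planarLatticeCone A)) (hM : 0 ∉ M) :
    IsQuasipolynomial (fun n => {w : κ → ℤ × ℤ | (∀ i, realPoint (w i) ∈ ((n : ℝ) + 1) • A) ∧
        Pairwise (Function.onFun (Nonattacking M) w)}.ncard) (2 * Fintype.card κ)
      (volume.real A ^ Fintype.card κ) := by
  classical
  have hvol : volume.real A ≠ 0 :=
    (ENNReal.toReal_pos (ho.measure_pos volume hne).ne' hb.measure_lt_top.ne).ne'
  have := isQuasipolynomial_latticeCount_inter_arrangementCompl (A := attackNormals κ M)
    (isBounded_configurations hb) (isOpen_configurations (κ := κ) ho).measurableSet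
    ((convex_configurations hc).addHaar_frontier volume)
    (by rw [volume_configurations ho.measurableSet]; positivity)
    (definable_latticeCone_configurations hdef) (zero_notMem_attackNormals hM)
  rw [volume_configurations ho.measurableSet, Fintype.card_sum, ← two_mul] at this
  simpa only [latticeCount_configurations_inter_arrangementCompl (Nat.cast_add_one_ne_zero _)]
    using this

end Configurations

/-! ### Tuples and sets -/

section Tuples

open scoped Nat

variable {α : Type*} {q : ℕ}

lemma card_image_univ_eq_iff_injective [DecidableEq α] {w : Fin q → α} :
    (Finset.univ.image w).card = q ↔ Function.Injective w := by
  rw [← Set.injOn_univ, ← Finset.coe_univ, ← Finset.card_image_iff, Finset.card_univ,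
    Fintype.card_fin]

lemma card_tuples_image_eq [DecidableEq α] {S : Finset α} (hS : S.card = q) :
    Nat.card {w : Fin q → α // Finset.univ.image w = S} = q ! := by
  have hrange : {w : Fin q → α | Finset.univ.image w = S} =
      Set.range fun (e : Fin q ≃ S) i => (e i : α) := by
    ext w
    constructor
    · rintro rfl
      exact ⟨(Equiv.ofInjective w (card_image_univ_eq_iff_injective.1 hS)).trans
        (Equiv.subtypeEquivRight (by simp)), rfl⟩
    · rintro ⟨e, rfl⟩
      ext a
      simp [e.exists_congr_left]
  have hinj : Function.Injective fun (e : Fin q ≃ S) i => (e i : α) :=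
    fun e e' h => Equiv.ext fun i => Subtype.ext (congrFun h i)
  rw [← Set.coe_ofPred, Nat.card_coe_set_eq, hrange, Set.ncard_range_of_injective hinj,
    Nat.card_eq_fintype_card, Fintype.card_equiv (S.equivFinOfCardEq hS).symm, Fintype.card_fin]

lemma pairwise_onFun_iff_card_image [DecidableEq α] {r : α → α → Prop} (hr : ∀ a, ¬ r a a)
    {w : Fin q → α} :
    Pairwise (Function.onFun r w) ↔
      (Finset.univ.image w).card = q ∧ (Finset.univ.image w : Set α).Pairwise r := by
  rw [card_image_univ_eq_iff_injective, Finset.coe_image, Finset.coe_univ]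
  constructor
  · intro h
    have hinj : Function.Injective w := fun i j hij => by_contra fun hne =>
      hr (w i) (by simpa only [Function.onFun, hij] using h hne)
    exact ⟨hinj, hinj.injOn.pairwise_image.2 (Set.pairwise_univ.2 h)⟩
  · exact fun ⟨hinj, h⟩ => Set.pairwise_univ.1 (hinj.injOn.pairwise_image.1 h)

theorem ncard_tuples_eq_factorial_mul (s : Set α) {r : α → α → Prop} (hr : ∀ a, ¬ r a a) :
    {w : Fin q → α | (∀ i, w i ∈ s) ∧ Pairwise (Function.onFun r w)}.ncard =
      q ! * {S : Finset α | S.card = q ∧ ↑S ⊆ s ∧ (S : Set α).Pairwise r}.ncard := by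
  classical
  have hiff (w : Fin q → α) : (∀ i, w i ∈ s) ∧ Pairwise (Function.onFun r w) ↔
      (Finset.univ.image w).card = q ∧ ↑(Finset.univ.image w) ⊆ s ∧
        (Finset.univ.image w : Set α).Pairwise r := by
    rw [pairwise_onFun_iff_card_image hr, and_left_comm]
    simp [Set.range_subset_iff]
  let fiberEquiv (S : {S : Finset α // S.card = q ∧ ↑S ⊆ s ∧ (S : Set α).Pairwise r}) :
      {w : Fin q → α // Finset.univ.image w = S} ≃ Fin (q !) :=
    have := Nat.finite_of_card_ne_zero (card_tuples_image_eq S.2.1 ▸ q.factorial_ne_zero)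
    Finite.equivFinOfCardEq (card_tuples_image_eq S.2.1)
  have := Nat.card_congr <| (Equiv.sigmaSubtypeFiberEquivSubtype _ hiff).symm.trans <|
    (Equiv.sigmaCongrRight fiberEquiv).trans (Equiv.sigmaEquivProd _ _)
  rwa [Nat.card_prod, Nat.card_fin, mul_comm] at this

end Tuples

section NonattackingSets

open scoped Nat

/-- The sets of `q` pairwise nonattacking lattice points of the board `A`. -/
def nonattackingSets (M : Finset (ℤ × ℤ)) (A : Set (ℝ × ℝ)) (q : ℕ) : Set (Finset (ℤ × ℤ)) :=
  {S | S.card = q ∧ ↑S ⊆ realPoint ⁻¹' A ∧ (S : Set (ℤ × ℤ)).Pairwise (Nonattacking M)}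

variable {M : Finset (ℤ × ℤ)}

lemma not_nonattacking_self (hM : M.Nonempty) (z : ℤ × ℤ) : ¬ Nonattacking M z z := by
  obtain ⟨m, hm⟩ := hM
  exact fun h => h m hm (by simp [cross])

theorem isQuasipolynomial_ncard_nonattackingSets (hMne : M.Nonempty) (hM : 0 ∉ M)
    {A : Set (ℝ × ℝ)} (hc : Convex ℝ A) (ho : IsOpen A) (hb : Bornology.IsBounded A)
    (hne : A.Nonempty) (hdef : Definable (planarLatticeCone A)) (q : ℕ) :
    IsQuasipolynomial (fun n => (nonattackingSets M (((n : ℝ) + 1) • A) q).ncard) (2 * q)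
      (volume.real A ^ q / q !) := by
  have hfac : (q ! : ℚ) ≠ 0 := by exact_mod_cast q.factorial_ne_zero
  have htuples := isQuasipolynomial_ncard_nonattacking_tuples (κ := Fin q) hc ho hb hne hdef hM
  have hcount (n : ℕ) : {w : Fin q → ℤ × ℤ | (∀ i, realPoint (w i) ∈ ((n : ℝ) + 1) • A) ∧
      Pairwise (Function.onFun (Nonattacking M) w)}.ncard =
        q ! * (nonattackingSets M (((n : ℝ) + 1) • A) q).ncard :=
    ncard_tuples_eq_factorial_mul (realPoint ⁻¹' (((n : ℝ) + 1) • A)) (not_nonattacking_self hMne)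
  simpa [hcount, hfac, div_eq_inv_mul] using htuples.const_mul (inv_ne_zero hfac)

end NonattackingSets

end QQueens

open QQueens in
theorem stmt_0_general (M : Finset (ℤ × ℤ)) (hMne : M.Nonempty) (hM : 0 ∉ M)
    (V : Finset (ℝ × ℝ)) (hV : ∀ v ∈ V, ∃ a b : ℚ, v = ((a : ℝ), (b : ℝ)))
    (B : Set (ℝ × ℝ)) (hB : B = convexHull ℝ (V : Set (ℝ × ℝ)))
    (hBint : (interior B).Nonempty) (q : ℕ) :
    IsQuasipolynomial (fun n => (nonattackingSets M (((n : ℝ) + 1) • interior B) q).ncard) (2 * q)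
      ((volume B).toReal ^ q / (Nat.factorial q : ℝ)) := by
  subst hB
  have hconvex := convex_convexHull ℝ (V : Set (ℝ × ℝ))
  have hbounded : Bornology.IsBounded (convexHull ℝ (V : Set (ℝ × ℝ))) :=
    isBounded_convexHull.2 V.finite_toSet.isBounded
  rw [← measure_congr (interior_ae_eq_of_null_frontier (hconvex.addHaar_frontier volume))]
  exact isQuasipolynomial_ncard_nonattackingSets hMne hM hconvex.interior isOpen_interior
    (hbounded.subset interior_subset) hBint (definable_planarLatticeCone_interior hV hBint) q

/-- For each positive integer `q`, the counting function `n ↦ u_P(q;n)` is a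
quasipolynomial in `n` of degree `2q` with leading coefficient `(vol B)^q / q!`. -/
theorem stmt_0
    (M : Finset (ℤ × ℤ)) (hMne : M.Nonempty)
    (hMmove : ∀ m ∈ M, m ≠ 0 ∧ Int.gcd m.1 m.2 = 1)
    (hMpar : ∀ m ∈ M, ∀ m' ∈ M, m ≠ m' → m.1 * m'.2 - m.2 * m'.1 ≠ 0)
    (V : Finset (ℝ × ℝ)) (hV : ∀ v ∈ V, ∃ a b : ℚ, v = ((a : ℝ), (b : ℝ)))
    (B : Set (ℝ × ℝ)) (hB : B = convexHull ℝ (V : Set (ℝ × ℝ)))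
    (hBint : (interior B).Nonempty)
    (q : ℕ) (hq : 0 < q)
    (u : ℕ → ℕ)
    (hu : ∀ n : ℕ, u n = Set.ncard {S : Finset (ℤ × ℤ) |
      S.card = q ∧
      (∀ z ∈ S, (((z.1 : ℝ), (z.2 : ℝ)) : ℝ × ℝ) ∈ ((n : ℝ) + 1) • interior B) ∧
      (∀ z ∈ S, ∀ w ∈ S, z ≠ w → ∀ m ∈ M,
        (z.1 - w.1) * m.2 - (z.2 - w.2) * m.1 ≠ 0)}) :
    ∃ p : ℕ, 0 < p ∧ ∃ f : ℕ → Polynomial ℚ,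
      (∀ k < p, (f k).degree = ((2 * q : ℕ) : WithBot ℕ) ∧
        ((f k).leadingCoeff : ℝ) = (volume B).toReal ^ q / (Nat.factorial q : ℝ)) ∧
      (∀ n : ℕ, (u n : ℚ) = (f (n % p)).eval (n : ℚ)) := by
  obtain rfl : u = _ := funext hu
  exact stmt_0_general M hMne (fun h => (hMmove 0 h).1 rfl) V hV B hB hBint q
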